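/- For all δ > 0 there is a constant C = C(δ) > 0 such that the following holds. For all ε > 0, A > 0, all p with 1/2 + δ ≤ p ≤ 1, all n ∈ ℕ and all f : {0,1}^n → {0,1}: if E_x[s_f(x)^p] ≤ A, then f is ε-close to a J-junta, where J = 2^{C·(A/ε)^{1/p}}. -/

import Mathlib

open Finset

noncomputable section

/-- Expectation over the uniform distribution on `{0,1}^n`. -/
def hcExp (n : ℕ) (g : (Fin n → Bool) → ℝ) : ℝ :=
  (∑ x : Fin n → Bool, g x) / 2 ^ n

/-- Flip the `i`-th coordinate of `x`. -/
def hcFlip {n : ℕ} (x : Fin n → Bool) (i : Fin n) : Fin n → Bool :=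
  Function.update x i (!(x i))

/-- Sensitivity of `f` at `x`. -/
def sens {n : ℕ} (f : (Fin n → Bool) → Bool) (x : Fin n → Bool) : ℕ :=
  (Finset.univ.filter fun i => f (hcFlip x i) ≠ f x).card

/-- `f` with values in `{0,1} ⊆ ℝ`. -/
def toReal {n : ℕ} (f : (Fin n → Bool) → Bool) : (Fin n → Bool) → ℝ :=
  fun x => if f x then 1 else 0

/-- Variance of a Boolean function. -/
def hcVar (n : ℕ) (f : (Fin n → Bool) → Bool) : ℝ :=
  hcExp n (toReal f) - (hcExp n (toReal f)) ^ 2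

/-- Influence of coordinate `i`. -/
def influence (n : ℕ) (f : (Fin n → Bool) → Bool) (i : Fin n) : ℝ :=
  hcExp n (fun x => if f (hcFlip x i) = f x then 0 else 1)

/-- Fourier character. -/
def chi {n : ℕ} (S : Finset (Fin n)) (x : Fin n → Bool) : ℝ :=
  ∏ i ∈ S, (if x i then (-1 : ℝ) else 1)

/-- Fourier coefficient of `g` at `S`. -/
def fcoef (n : ℕ) (g : (Fin n → Bool) → ℝ) (S : Finset (Fin n)) : ℝ :=
  hcExp n (fun x => g x * chi S x)

/-- Derivative of `g` along coordinate `i`. -/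
def derivOn {n : ℕ} (g : (Fin n → Bool) → ℝ) (i : Fin n) (x : Fin n → Bool) : ℝ :=
  g (Function.update x i false) - g (Function.update x i true)

/-- Euclidean norm of the gradient of `g` at `x`. -/
def gradNorm2 {n : ℕ} (g : (Fin n → Bool) → ℝ) (x : Fin n → Bool) : ℝ :=
  Real.sqrt (∑ i, (derivOn g i x) ^ 2)

/-- `ℓ_p` norm of the gradient of `g` at `x`. -/
def gradNormP {n : ℕ} (p : ℝ) (g : (Fin n → Bool) → ℝ) (x : Fin n → Bool) : ℝ :=
  (∑ i, |derivOn g i x| ^ p) ^ (1 / p)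

/-- Fourier weight at exactly level `d`. -/
def wEq (n : ℕ) (g : (Fin n → Bool) → ℝ) (d : ℕ) : ℝ :=
  ∑ S ∈ Finset.univ.filter (fun S : Finset (Fin n) => S.card = d), (fcoef n g S) ^ 2

/-- Approximate level-`d` Fourier weight: levels in `[d, 2d)`. -/
def wApprox (n : ℕ) (g : (Fin n → Bool) → ℝ) (d : ℕ) : ℝ :=
  ∑ S ∈ Finset.univ.filter (fun S : Finset (Fin n) => d ≤ S.card ∧ S.card < 2 * d),
    (fcoef n g S) ^ 2

/-- Fourier weight at levels `≥ d`. -/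
def wGe (n : ℕ) (g : (Fin n → Bool) → ℝ) (d : ℕ) : ℝ :=
  ∑ S ∈ Finset.univ.filter (fun S : Finset (Fin n) => d ≤ S.card), (fcoef n g S) ^ 2


/-- `g` is a `j`-junta: it depends only on some set of at most `j` coordinates. -/
def isJunta {n : ℕ} (j : ℕ) (g : (Fin n → Bool) → Bool) : Prop :=
  ∃ J : Finset (Fin n), J.card ≤ j ∧
    ∀ x y : Fin n → Bool, (∀ i ∈ J, x i = y i) → g x = g y

/-- `f` is `ε`-close to a `j`-junta. -/
def closeToJunta {n : ℕ} (ε : ℝ) (j : ℕ) (f : (Fin n → Bool) → Bool) : Prop :=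
  ∃ g : (Fin n → Bool) → Bool, isJunta j g ∧
    hcExp n (fun x => if f x = g x then 0 else 1) ≤ ε

lemma hcExp_add (n : ℕ) (g h : (Fin n → Bool) → ℝ) :
    hcExp n (fun x => g x + h x) = hcExp n g + hcExp n h := by
  simp [hcExp, Finset.sum_add_distrib, add_div]

lemma hcExp_sub (n : ℕ) (g h : (Fin n → Bool) → ℝ) :
    hcExp n (fun x => g x - h x) = hcExp n g - hcExp n h := by
  simp [hcExp, Finset.sum_sub_distrib, sub_div]

lemma hcExp_mul_left (n : ℕ) (c : ℝ) (g : (Fin n → Bool) → ℝ) :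
    hcExp n (fun x => c * g x) = c * hcExp n g := by
  simp [hcExp, ← Finset.mul_sum, mul_div_assoc]

lemma hcExp_sum {ι : Type*} (n : ℕ) (s : Finset ι) (g : ι → (Fin n → Bool) → ℝ) :
    hcExp n (fun x => ∑ i ∈ s, g i x) = ∑ i ∈ s, hcExp n (g i) := by
  simp only [hcExp]
  rw [Finset.sum_comm, Finset.sum_div]

lemma hcExp_mono (n : ℕ) {g h : (Fin n → Bool) → ℝ} (H : ∀ x, g x ≤ h x) :
    hcExp n g ≤ hcExp n h := by
  unfold hcExp
  gcongr with x
  exact H x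

lemma hcExp_const (n : ℕ) (c : ℝ) : hcExp n (fun _ => c) = c := by
  simp [hcExp]

lemma hcExp_nonneg (n : ℕ) {g : (Fin n → Bool) → ℝ} (H : ∀ x, 0 ≤ g x) :
    0 ≤ hcExp n g := by
  rw [← hcExp_const n 0]; exact hcExp_mono n H

lemma hcFlip_hcFlip {n : ℕ} (x : Fin n → Bool) (i : Fin n) : hcFlip (hcFlip x i) i = x := by
  simp [hcFlip]

lemma hcExp_flip (n : ℕ) (i : Fin n) (g : (Fin n → Bool) → ℝ) :
    hcExp n (fun x => g (hcFlip x i)) = hcExp n g := by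
  unfold hcExp
  congr 1
  exact Function.Bijective.sum_comp
    (Function.Involutive.bijective (f := fun x : Fin n → Bool => hcFlip x i)
      (fun x => hcFlip_hcFlip x i)) g

lemma chi_flip {n : ℕ} (S : Finset (Fin n)) (x : Fin n → Bool) (i : Fin n) :
    chi S (hcFlip x i) = (if i ∈ S then -1 else 1) * chi S x := by
  unfold chi
  by_cases h : i ∈ S
  · rw [if_pos h, ← Finset.mul_prod_erase S _ h, ← Finset.mul_prod_erase S _ h, ← mul_assoc]
    congr 1
    · cases hx : x i <;> simp [hcFlip, hx]
    · apply Finset.prod_congr rfl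
      intro j hj
      simp [hcFlip, Function.update_of_ne (Finset.ne_of_mem_erase hj)]
  · rw [if_neg h, one_mul]
    apply Finset.prod_congr rfl
    intro j hj
    have : j ≠ i := fun e => h (e ▸ hj)
    simp [hcFlip, Function.update_of_ne this]

lemma chi_mul {n : ℕ} (S T : Finset (Fin n)) (x : Fin n → Bool) :
    chi S x * chi T x = chi (symmDiff S T) x := by
  have key : ∀ U : Finset (Fin n), chi U x = ∏ i, (if i ∈ U then (if x i then (-1 : ℝ) else 1) else 1) := by
    intro U
    unfold chi
    rw [Finset.prod_ite_mem]; simp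
  rw [key, key, key, ← Finset.prod_mul_distrib]
  apply Finset.prod_congr rfl
  intro i _
  by_cases h1 : i ∈ S <;> by_cases h2 : i ∈ T <;> cases hx : x i <;> simp [Finset.mem_symmDiff, h1, h2]

lemma chi_sq {n : ℕ} (S : Finset (Fin n)) (x : Fin n → Bool) : chi S x ^ 2 = 1 := by
  rw [sq, chi_mul]; simp [chi]

lemma hcExp_chi {n : ℕ} (S : Finset (Fin n)) : hcExp n (chi S) = if S = ∅ then 1 else 0 := by
  split_ifs with h
  · subst h
    have : (chi ∅ : (Fin n → Bool) → ℝ) = fun _ => 1 := by ext x; simp [chi]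
    rw [this, hcExp_const]
  · obtain ⟨i, hi⟩ := Finset.nonempty_iff_ne_empty.2 h
    have h1 := hcExp_flip n i (chi S)
    have : (fun x => chi S (hcFlip x i)) = fun x => (-1) * chi S x := by
      ext x; rw [chi_flip, if_pos hi]
    rw [this, hcExp_mul_left] at h1
    linarith

lemma fcoef_chi {n : ℕ} (T S : Finset (Fin n)) : fcoef n (chi T) S = if S = T then 1 else 0 := by
  unfold fcoef
  have : (fun x => chi T x * chi S x) = chi (symmDiff T S) := by ext x; rw [chi_mul]
  rw [this, hcExp_chi]
  congr 1
  rw [← Finset.bot_eq_empty, symmDiff_eq_bot]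
  exact propext eq_comm

lemma sum_chi {n : ℕ} (x y : Fin n → Bool) :
    ∑ S : Finset (Fin n), chi S x * chi S y = if x = y then 2 ^ n else 0 := by
  have h : ∀ S : Finset (Fin n), chi S x * chi S y = ∏ i ∈ S, (if x i = y i then (1:ℝ) else -1) := by
    intro S
    unfold chi
    rw [← Finset.prod_mul_distrib]
    apply Finset.prod_congr rfl
    intro i _
    cases hx : x i <;> cases hy : y i <;> simp
  simp only [h]
  rw [← Finset.powerset_univ, ← Finset.prod_one_add]
  split_ifs with e
  · subst e; norm_num
  · obtain ⟨i, hi⟩ := Function.ne_iff.1 e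
    apply Finset.prod_eq_zero (Finset.mem_univ i)
    simp [hi]

lemma fourier_inv {n : ℕ} (g : (Fin n → Bool) → ℝ) (x : Fin n → Bool) :
    ∑ S : Finset (Fin n), fcoef n g S * chi S x = g x := by
  have h : ∀ S : Finset (Fin n), fcoef n g S * chi S x = ∑ y, g y / 2 ^ n * (chi S y * chi S x) := by
    intro S
    unfold fcoef hcExp
    rw [Finset.sum_div, Finset.sum_mul]
    apply Finset.sum_congr rfl
    intro y _; ring
  simp only [h]
  rw [Finset.sum_comm]
  simp only [← Finset.mul_sum, sum_chi]
  simp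

lemma plancherel {n : ℕ} (g h : (Fin n → Bool) → ℝ) :
    hcExp n (fun x => g x * h x) = ∑ S : Finset (Fin n), fcoef n g S * fcoef n h S := by
  have : (fun x => g x * h x) = fun x => ∑ S : Finset (Fin n), fcoef n h S * (g x * chi S x) := by
    ext x
    conv_lhs => rw [← fourier_inv h x]
    rw [Finset.mul_sum]
    apply Finset.sum_congr rfl
    intro S _; ring
  rw [this, hcExp_sum]
  apply Finset.sum_congr rfl
  intro S _
  rw [hcExp_mul_left, mul_comm]; rfl

lemma parseval {n : ℕ} (g : (Fin n → Bool) → ℝ) :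
    hcExp n (fun x => g x ^ 2) = ∑ S : Finset (Fin n), fcoef n g S ^ 2 := by
  simp only [sq]; exact plancherel g g

lemma fcoef_add {n : ℕ} (g h : (Fin n → Bool) → ℝ) (S : Finset (Fin n)) :
    fcoef n (fun x => g x + h x) S = fcoef n g S + fcoef n h S := by
  unfold fcoef
  rw [← hcExp_add]; congr 1; ext x; ring

lemma fcoef_sub {n : ℕ} (g h : (Fin n → Bool) → ℝ) (S : Finset (Fin n)) :
    fcoef n (fun x => g x - h x) S = fcoef n g S - fcoef n h S := by
  unfold fcoef
  rw [← hcExp_sub]; congr 1; ext x; ring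

lemma fcoef_mul_left {n : ℕ} (c : ℝ) (h : (Fin n → Bool) → ℝ) (S : Finset (Fin n)) :
    fcoef n (fun x => c * h x) S = c * fcoef n h S := by
  unfold fcoef
  rw [← hcExp_mul_left]; congr 1; ext x; ring

lemma fcoef_sum {ι : Type*} {n : ℕ} (s : Finset ι) (g : ι → (Fin n → Bool) → ℝ)
    (S : Finset (Fin n)) :
    fcoef n (fun x => ∑ i ∈ s, g i x) S = ∑ i ∈ s, fcoef n (g i) S := by
  unfold fcoef
  rw [← hcExp_sum]; congr 1; ext x; rw [Finset.sum_mul]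

lemma fcoef_poly {n : ℕ} (F : Finset (Finset (Fin n))) (a : Finset (Fin n) → ℝ)
    (S : Finset (Fin n)) :
    fcoef n (fun x => ∑ T ∈ F, a T * chi T x) S = if S ∈ F then a S else 0 := by
  rw [fcoef_sum]
  simp only [fcoef_mul_left, fcoef_chi]
  simp

/-- discrete derivative -/
def dd {n : ℕ} (g : (Fin n → Bool) → ℝ) (i : Fin n) (x : Fin n → Bool) : ℝ := g x - g (hcFlip x i)

lemma fcoef_dd {n : ℕ} (g : (Fin n → Bool) → ℝ) (i : Fin n) (S : Finset (Fin n)) :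
    fcoef n (dd g i) S = if i ∈ S then 2 * fcoef n g S else 0 := by
  have h := fcoef_sub g (fun x => g (hcFlip x i)) S
  have h2 : fcoef n (fun x => g (hcFlip x i)) S = (if i ∈ S then -1 else 1) * fcoef n g S := by
    unfold fcoef
    rw [← hcExp_flip n i, ← hcExp_mul_left]
    congr 1; ext x
    simp only [hcFlip_hcFlip, chi_flip]; ring
  unfold dd
  rw [h, h2]
  split_ifs <;> ring

/-- low degree -/
def Deg {n : ℕ} (d : ℕ) (g : (Fin n → Bool) → ℝ) : Prop :=
  ∀ S : Finset (Fin n), d < S.card → fcoef n g S = 0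

lemma Deg.mul {n d e : ℕ} {g h : (Fin n → Bool) → ℝ} (hg : Deg d g) (hh : Deg e h) :
    Deg (d + e) (fun x => g x * h x) := by
  intro S hS
  have : (fun x => g x * h x) = fun x => ∑ T : Finset (Fin n), ∑ U : Finset (Fin n),
      (fcoef n g T * fcoef n h U) * chi (symmDiff T U) x := by
    ext x
    conv_lhs => rw [← fourier_inv g x, ← fourier_inv h x, Finset.sum_mul_sum]
    apply Finset.sum_congr rfl; intro T _
    apply Finset.sum_congr rfl; intro U _
    rw [← chi_mul]; ring
  rw [this, fcoef_sum]
  apply Finset.sum_eq_zero; intro T _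
  rw [fcoef_sum]
  apply Finset.sum_eq_zero; intro U _
  rw [fcoef_mul_left, fcoef_chi]
  by_cases hT : d < T.card
  · rw [hg T hT]; ring
  by_cases hU : e < U.card
  · rw [hh U hU]; ring
  rw [if_neg, mul_zero]
  rintro rfl
  have h1 : (symmDiff T U).card ≤ (T ∪ U).card :=
    Finset.card_le_card (by intro i; simp only [Finset.mem_symmDiff, Finset.mem_union]; tauto)
  have h2 := Finset.card_union_le T U
  omega

lemma Deg.sum {ι : Type*} {n d : ℕ} (s : Finset ι) {g : ι → (Fin n → Bool) → ℝ}
    (hg : ∀ i ∈ s, Deg d (g i)) : Deg d (fun x => ∑ i ∈ s, g i x) := by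
  intro S hS
  rw [fcoef_sum]
  exact Finset.sum_eq_zero fun i hi => hg i hi S hS

lemma hcExp_cs {n : ℕ} (g h : (Fin n → Bool) → ℝ) :
    hcExp n (fun x => g x * h x) ^ 2 ≤ hcExp n (fun x => g x ^ 2) * hcExp n (fun x => h x ^ 2) := by
  unfold hcExp
  have := Finset.sum_mul_sq_le_sq_mul_sq Finset.univ g h
  rw [div_pow, div_mul_div_comm, ← sq]
  gcongr

lemma bonami_aux {n : ℕ} (T : Finset (Fin n)) : ∀ a : Finset (Fin n) → ℝ,
    hcExp n (fun x => (∑ S ∈ T.powerset, a S * chi S x) ^ 4) ≤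
      (∑ S ∈ T.powerset, 3 ^ S.card * a S ^ 2) ^ 2 := by
  induction T using Finset.induction_on with
  | empty =>
    intro a
    simp only [Finset.powerset_empty, Finset.sum_singleton]
    have : (fun x : Fin n → Bool => (a ∅ * chi ∅ x) ^ 4) = fun _ => a ∅ ^ 4 := by
      ext x; simp [chi]
    rw [this, hcExp_const]
    simp; apply le_of_eq; ring
  | insert i T hi ih =>
    intro a
    set u : (Fin n → Bool) → ℝ := fun x => ∑ S ∈ T.powerset, a S * chi S x with hu
    set v : (Fin n → Bool) → ℝ := fun x => ∑ S ∈ T.powerset, a (insert i S) * chi S x with hv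
    set e : (Fin n → Bool) → ℝ := chi {i} with he
    set α := ∑ S ∈ T.powerset, 3 ^ S.card * a S ^ 2 with hα
    set β := ∑ S ∈ T.powerset, 3 ^ S.card * a (insert i S) ^ 2 with hβ
    have hα0 : 0 ≤ α := Finset.sum_nonneg fun S _ => by positivity
    have hβ0 : 0 ≤ β := Finset.sum_nonneg fun S _ => by positivity
    have hnm : ∀ S ∈ T.powerset, i ∉ S := fun S hS h => hi (Finset.mem_powerset.1 hS h)
    have h1 : ∀ x, ∑ S ∈ (insert i T).powerset, a S * chi S x = u x + e x * v x := by
      intro x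
      rw [Finset.sum_powerset_insert hi, hu, hv, Finset.mul_sum]
      congr 1
      apply Finset.sum_congr rfl
      intro S hS
      have : chi (insert i S) x = e x * chi S x := by
        simp [he, chi, Finset.prod_insert (hnm S hS)]
      rw [this]; ring
    have h2 : ∑ S ∈ (insert i T).powerset, 3 ^ S.card * a S ^ 2 = α + 3 * β := by
      rw [Finset.sum_powerset_insert hi, hα, hβ, Finset.mul_sum]
      congr 1
      apply Finset.sum_congr rfl
      intro S hS
      rw [Finset.card_insert_of_notMem (hnm S hS)]; ring
    have hue : ∀ x, u (hcFlip x i) = u x := by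
      intro x
      apply Finset.sum_congr rfl
      intro S hS
      rw [chi_flip, if_neg (hnm S hS), one_mul]
    have hve : ∀ x, v (hcFlip x i) = v x := by
      intro x
      apply Finset.sum_congr rfl
      intro S hS
      rw [chi_flip, if_neg (hnm S hS), one_mul]
    have hee : ∀ x, e (hcFlip x i) = - e x := by
      intro x
      rw [he, chi_flip]; simp
    have he2 : ∀ x, e x ^ 2 = 1 := fun x => chi_sq _ x
    set w : (Fin n → Bool) → ℝ := fun x => e x * (4 * u x ^ 3 * v x + 4 * u x * v x ^ 3) with hw
    have hw0 : hcExp n w = 0 := by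
      have := hcExp_flip n i w
      have h' : (fun x => w (hcFlip x i)) = fun x => (-1) * w x := by
        ext x; simp only [hw, hue, hve, hee]; ring
      rw [h', hcExp_mul_left] at this
      linarith
    have h3 : (fun x => (∑ S ∈ (insert i T).powerset, a S * chi S x) ^ 4) =
        fun x => ((u x ^ 4 + 6 * (u x ^ 2 * v x ^ 2)) + v x ^ 4) + w x := by
      ext x
      rw [h1]
      have e4 : e x ^ 4 = 1 := by
        have : e x ^ 4 = (e x ^ 2) ^ 2 := by ring
        rw [this, he2]; norm_num
      have e3 : e x ^ 3 = e x := by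
        have : e x ^ 3 = (e x ^ 2) * e x := by ring
        rw [this, he2]; ring
      calc (u x + e x * v x) ^ 4 = u x ^ 4 + 6 * e x ^ 2 * (u x ^ 2 * v x ^ 2) + e x ^ 4 * v x ^ 4
            + (e x * (4 * u x ^ 3 * v x) + e x ^ 3 * (4 * u x * v x ^ 3)) := by ring
        _ = _ := by rw [he2, e4, e3, hw]; ring
    rw [h3, hcExp_add, hcExp_add, hcExp_add, hw0, hcExp_mul_left, h2]
    have hU : hcExp n (fun x => u x ^ 4) ≤ α ^ 2 := ih a
    have hV : hcExp n (fun x => v x ^ 4) ≤ β ^ 2 := ih (fun S => a (insert i S))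
    have hUV : hcExp n (fun x => u x ^ 2 * v x ^ 2) ≤ α * β := by
      have := hcExp_cs (fun x => u x ^ 2) (fun x => v x ^ 2)
      simp only [← pow_mul] at this
      norm_num at this
      have hV0 : 0 ≤ hcExp n (fun x => v x ^ 4) := hcExp_nonneg n fun x => by positivity
      refine le_of_sq_le_sq ?_ (by positivity)
      calc _ ≤ _ := this
        _ ≤ α ^ 2 * β ^ 2 := by gcongr
        _ = _ := by ring
    nlinarith [mul_nonneg hα0 hβ0, mul_nonneg hβ0 hβ0]

lemma bonami {n d : ℕ} {g : (Fin n → Bool) → ℝ} (hg : Deg d g) :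
    hcExp n (fun x => g x ^ 4) ≤ 9 ^ d * hcExp n (fun x => g x ^ 2) ^ 2 := by
  have h := bonami_aux (Finset.univ : Finset (Fin n)) (fcoef n g)
  simp only [Finset.powerset_univ, fourier_inv] at h
  refine h.trans ?_
  rw [parseval]
  have : ∑ S : Finset (Fin n), (3 : ℝ) ^ S.card * fcoef n g S ^ 2 ≤
      3 ^ d * ∑ S : Finset (Fin n), fcoef n g S ^ 2 := by
    rw [Finset.mul_sum]
    apply Finset.sum_le_sum
    intro S _
    by_cases hS : d < S.card
    · rw [hg S hS]; simp
    · have : (3 : ℝ) ^ S.card ≤ 3 ^ d := pow_le_pow_right₀ (by norm_num) (by omega)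
      gcongr
  calc _ ≤ (3 ^ d * ∑ S : Finset (Fin n), fcoef n g S ^ 2) ^ 2 := by
        gcongr
    _ = _ := by rw [mul_pow, ← pow_mul, mul_comm d 2, pow_mul]; norm_num

lemma hyper (m : ℕ) : ∃ B : ℝ, 1 ≤ B ∧ ∀ (n d : ℕ) (g : (Fin n → Bool) → ℝ), Deg d g →
    hcExp n (fun x => g x ^ (2 ^ (m + 1))) ≤ B ^ d * hcExp n (fun x => g x ^ 2) ^ (2 ^ m) := by
  induction m with
  | zero => exact ⟨1, le_rfl, fun n d g _ => by simp⟩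
  | succ m ih =>
    obtain ⟨B, hB, H⟩ := ih
    refine ⟨B ^ 2 * 9 ^ (2 ^ m), one_le_mul_of_one_le_of_one_le (one_le_pow₀ hB)
      (one_le_pow₀ (by norm_num)), fun n d g hg => ?_⟩
    have h1 := H n (d + d) (fun x => g x * g x) (hg.mul hg)
    have h2 := bonami hg
    have e1 : (fun x => (g x * g x) ^ (2 ^ (m + 1))) = fun x => g x ^ (2 ^ (m + 1 + 1)) := by
      ext x; rw [← sq, ← pow_mul, pow_succ 2 (m+1), mul_comm]
    have e2 : (fun x => (g x * g x) ^ 2) = fun x => g x ^ 4 := by ext x; ring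
    rw [e1, e2] at h1
    have h0 : 0 ≤ hcExp n (fun x => g x ^ 4) := hcExp_nonneg n fun x => by positivity
    calc _ ≤ _ := h1
      _ ≤ B ^ (d + d) * (9 ^ d * hcExp n (fun x => g x ^ 2) ^ 2) ^ (2 ^ m) := by gcongr
      _ = _ := by rw [mul_pow, mul_pow, ← pow_mul, ← pow_mul, ← pow_mul, ← pow_mul, pow_succ 2 m]; ring_nf

lemma hyper_vec (m : ℕ) : ∃ B : ℝ, 1 ≤ B ∧ ∀ (n d : ℕ) (I : Finset (Fin n))
    (g : Fin n → (Fin n → Bool) → ℝ), (∀ i ∈ I, Deg d (g i)) →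
    hcExp n (fun x => (∑ i ∈ I, g i x ^ 2) ^ (2 ^ (m + 1))) ≤
      B ^ d * (∑ i ∈ I, hcExp n (fun x => g i x ^ 2)) ^ (2 ^ (m + 1)) := by
  obtain ⟨B, hB, H⟩ := hyper m
  refine ⟨B ^ 2 * 9 ^ (2 ^ m), one_le_mul_of_one_le_of_one_le (one_le_pow₀ hB)
      (one_le_pow₀ (by norm_num)), fun n d I g hg => ?_⟩
  have hD : Deg (d + d) (fun x => ∑ i ∈ I, g i x ^ 2) := by
    apply Deg.sum
    intro i hi
    simp only [sq]
    exact (hg i hi).mul (hg i hi)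
  have h1 := H n (d + d) _ hD
  have h2 : hcExp n (fun x => (∑ i ∈ I, g i x ^ 2) ^ 2) ≤
      9 ^ d * (∑ i ∈ I, hcExp n (fun x => g i x ^ 2)) ^ 2 := by
    have e : (fun x => (∑ i ∈ I, g i x ^ 2) ^ 2) =
        fun x => ∑ i ∈ I, ∑ j ∈ I, g i x ^ 2 * g j x ^ 2 := by
      ext x; rw [sq, Finset.sum_mul_sum]
    rw [e, hcExp_sum, sq, Finset.sum_mul_sum, Finset.mul_sum]
    apply Finset.sum_le_sum; intro i hi
    rw [hcExp_sum, Finset.mul_sum]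
    apply Finset.sum_le_sum; intro j hj
    have := hcExp_cs (fun x => g i x ^ 2) (fun x => g j x ^ 2)
    simp only [← pow_mul] at this
    norm_num at this
    have hi0 : 0 ≤ hcExp n (fun x => g i x ^ 2) := hcExp_nonneg n fun x => by positivity
    have hj0 : 0 ≤ hcExp n (fun x => g j x ^ 2) := hcExp_nonneg n fun x => by positivity
    have hj4 : 0 ≤ hcExp n (fun x => g j x ^ 4) := hcExp_nonneg n fun x => by positivity
    refine le_of_sq_le_sq ?_ (by positivity)
    calc _ ≤ _ := this
      _ ≤ (9 ^ d * hcExp n (fun x => g i x ^ 2) ^ 2) * (9 ^ d * hcExp n (fun x => g j x ^ 2) ^ 2) := by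
        gcongr
        · exact bonami (hg i hi)
        · exact bonami (hg j hj)
      _ = _ := by ring
  have h0 : 0 ≤ hcExp n (fun x => (∑ i ∈ I, g i x ^ 2) ^ 2) := hcExp_nonneg n fun x => by positivity
  calc _ ≤ _ := h1
    _ ≤ B ^ (d + d) * (9 ^ d * (∑ i ∈ I, hcExp n (fun x => g i x ^ 2)) ^ 2) ^ (2 ^ m) := by gcongr
    _ = _ := by rw [mul_pow, mul_pow, ← pow_mul, ← pow_mul, ← pow_mul, ← pow_mul, pow_succ 2 m]; ring_nf

lemma hcExp_holder {n : ℕ} {p q : ℝ} (hpq : p.HolderConjugate q) (g h : (Fin n → Bool) → ℝ)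
    (hg : ∀ x, 0 ≤ g x) (hh : ∀ x, 0 ≤ h x) :
    hcExp n (fun x => g x * h x) ≤
      hcExp n (fun x => g x ^ p) ^ (1 / p) * hcExp n (fun x => h x ^ q) ^ (1 / q) := by
  have := Real.inner_le_Lp_mul_Lq_of_nonneg Finset.univ hpq (f := g) (g := h)
    (fun i _ => hg i) (fun i _ => hh i)
  unfold hcExp
  have h1 : 0 ≤ ∑ x, g x ^ p := Finset.sum_nonneg fun x _ => Real.rpow_nonneg (hg x) _
  have h2 : 0 ≤ ∑ x, h x ^ q := Finset.sum_nonneg fun x _ => Real.rpow_nonneg (hh x) _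
  rw [Real.div_rpow h1 (by positivity), Real.div_rpow h2 (by positivity), div_mul_div_comm,
    ← Real.rpow_add (by positivity)]
  have h3 : 1 / p + 1 / q = 1 := by simpa using hpq.inv_add_inv_eq_one
  rw [h3, Real.rpow_one]
  gcongr

/-- exponent -/
def kk (m : ℕ) : ℝ := 2 ^ (m + 1)
def rr (m : ℕ) : ℝ := kk m / (2 * kk m - 1)

lemma kk_ge (m : ℕ) : 2 ≤ kk m := by
  unfold kk; rw [pow_succ]
  have : (1:ℝ) ≤ 2 ^ m := one_le_pow₀ (by norm_num)
  linarith

lemma rr_pos (m : ℕ) : 0 < rr m := by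
  have := kk_ge m
  unfold rr; apply div_pos <;> linarith

lemma one_div_rr (m : ℕ) : 1 / rr m = 2 - 1 / kk m := by
  have := kk_ge m
  unfold rr; field_simp

lemma levelH (m : ℕ) : ∃ B : ℝ, 1 ≤ B ∧ ∀ (n d : ℕ) (I : Finset (Fin n))
    (h : Fin n → (Fin n → Bool) → ℝ),
    ∑ i ∈ I, ∑ S ∈ Finset.univ.filter (fun S : Finset (Fin n) => S.card ≤ d), fcoef n (h i) S ^ 2 ≤
      B ^ d * hcExp n (fun x => (∑ i ∈ I, h i x ^ 2) ^ rr m) ^ (1 / rr m) := by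
  obtain ⟨B, hB, H⟩ := hyper_vec m
  refine ⟨B, hB, fun n d I h => ?_⟩
  set F := Finset.univ.filter (fun S : Finset (Fin n) => S.card ≤ d) with hF
  set V := ∑ i ∈ I, ∑ S ∈ F, fcoef n (h i) S ^ 2 with hV
  set G : Fin n → (Fin n → Bool) → ℝ := fun i x => ∑ S ∈ F, fcoef n (h i) S * chi S x with hG
  have hGc : ∀ i S, fcoef n (G i) S = if S ∈ F then fcoef n (h i) S else 0 := fun i S =>
    fcoef_poly F _ S
  have hdeg : ∀ i ∈ I, Deg d (G i) := by
    intro i _ S hS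
    rw [hGc, if_neg]
    simp [hF, hS]
  have hk := kk_ge m
  have hr := rr_pos m
  set k := kk m with hkdef
  set r := rr m with hrdef
  have e1 : V = ∑ i ∈ I, hcExp n (fun x => G i x ^ 2) := by
    apply Finset.sum_congr rfl; intro i _
    rw [parseval]
    simp only [hGc, ite_pow, ne_eq, OfNat.ofNat_ne_zero, not_false_eq_true, zero_pow]
    rw [Finset.sum_ite_mem]; simp
  have e2 : V = hcExp n (fun x => ∑ i ∈ I, h i x * G i x) := by
    rw [hcExp_sum]
    apply Finset.sum_congr rfl; intro i _
    rw [plancherel]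
    simp only [hGc, mul_ite, mul_zero]
    rw [Finset.sum_ite_mem]; simp [sq]
  have hV0 : 0 ≤ V := Finset.sum_nonneg fun i _ => Finset.sum_nonneg fun S _ => sq_nonneg _
  set N := hcExp n (fun x => (∑ i ∈ I, h i x ^ 2) ^ r) with hN
  have hN0 : 0 ≤ N := hcExp_nonneg n fun x => Real.rpow_nonneg (Finset.sum_nonneg fun i _ => sq_nonneg _) _
  have hpq : (2 * r).HolderConjugate (2 * k) := by
    rw [Real.holderConjugate_iff]
    have : r = k / (2 * k - 1) := rfl
    constructor
    · rw [this, ← mul_div_assoc, lt_div_iff₀ (by linarith)]; linarith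
    · rw [this]
      have : 2 * k - 1 ≠ 0 := by linarith
      field_simp
      ring
  have e3 : V ≤ N ^ (1 / (2 * r)) * (B ^ d * V ^ (2 ^ (m+1))) ^ (1 / (2 * k)) := by
    calc V ≤ hcExp n (fun x => √(∑ i ∈ I, h i x ^ 2) * √(∑ i ∈ I, G i x ^ 2)) := by
          rw [e2]
          apply hcExp_mono
          intro x
          exact Real.sum_mul_le_sqrt_mul_sqrt _ _ _
      _ ≤ _ := hcExp_holder hpq _ _ (fun x => Real.sqrt_nonneg _) (fun x => Real.sqrt_nonneg _)
      _ = N ^ (1 / (2 * r)) * hcExp n (fun x => (∑ i ∈ I, G i x ^ 2) ^ (2 ^ (m + 1))) ^ (1 / (2 * k)) := by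
          congr 2
          · rw [hN]; congr 1; ext x
            rw [Real.sqrt_eq_rpow, ← Real.rpow_mul (Finset.sum_nonneg fun i _ => sq_nonneg _)]
            congr 1; ring
          · congr 1; ext x
            rw [Real.sqrt_eq_rpow, ← Real.rpow_mul (Finset.sum_nonneg fun i _ => sq_nonneg _),
              ← Real.rpow_natCast]
            congr 1
            rw [hkdef, kk]; push_cast; ring
      _ ≤ _ := by
          have h0 : 0 ≤ hcExp n (fun x => (∑ i ∈ I, G i x ^ 2) ^ (2 ^ (m + 1))) :=
            hcExp_nonneg n fun x => by positivity
          have := H n d I G hdeg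
          rw [← e1] at this
          gcongr
  rcases hV0.eq_or_lt with h0 | hVpos
  · rw [← h0]; positivity
  have e4 : (B ^ d * V ^ (2 ^ (m+1))) ^ (1 / (2 * k)) = (B ^ d) ^ (1 / (2 * k)) * V ^ ((1:ℝ) / 2) := by
    rw [Real.mul_rpow (by positivity) (by positivity), ← Real.rpow_natCast V, ← Real.rpow_mul hV0]
    congr 2
    have : ((2 ^ (m + 1) : ℕ) : ℝ) = k := by rw [hkdef, kk]; push_cast; rfl
    rw [this]; field_simp
  rw [e4, ← mul_assoc] at e3
  have hs : V ^ ((1:ℝ)/2) * V ^ ((1:ℝ)/2) = V := by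
    rw [← Real.rpow_add hVpos]; norm_num
  have hsp : 0 < V ^ ((1:ℝ)/2) := Real.rpow_pos_of_pos hVpos _
  have e5 : V ^ ((1:ℝ)/2) ≤ N ^ (1 / (2 * r)) * (B ^ d) ^ (1 / (2 * k)) := by
    apply le_of_mul_le_mul_right _ hsp
    rw [hs]; exact e3
  have hBd : 1 ≤ B ^ d := one_le_pow₀ hB
  calc V = V ^ ((1:ℝ)/2) * V ^ ((1:ℝ)/2) := hs.symm
    _ ≤ (N ^ (1 / (2 * r)) * (B ^ d) ^ (1 / (2 * k))) * (N ^ (1 / (2 * r)) * (B ^ d) ^ (1 / (2 * k))) := by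
      gcongr
    _ = (B ^ d) ^ (1 / k) * N ^ (1 / r) := by
      have a1 : N ^ (1 / r) = N ^ (1 / (2 * r)) * N ^ (1 / (2 * r)) := by
        rw [← Real.rpow_add_of_nonneg hN0 (by positivity) (by positivity)]
        congr 1; field_simp; norm_num
      have a2 : (B ^ d) ^ (1 / k) = (B ^ d) ^ (1 / (2 * k)) * (B ^ d) ^ (1 / (2 * k)) := by
        rw [← Real.rpow_add (by positivity)]
        congr 1; field_simp; norm_num
      rw [a1, a2]; ring
    _ ≤ B ^ d * N ^ (1 / r) := by
      gcongr
      calc (B ^ d) ^ (1 / k) ≤ (B ^ d) ^ (1 : ℝ) :=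
            Real.rpow_le_rpow_of_exponent_le hBd (by rw [div_le_one (by linarith)]; linarith)
        _ = B ^ d := Real.rpow_one _

lemma chi_piecewise {n : ℕ} (J S : Finset (Fin n)) (x y : Fin n → Bool) :
    chi S (J.piecewise y x) = chi (S ∩ J) y * chi (S \ J) x := by
  unfold chi
  rw [← Finset.prod_inter_mul_prod_sdiff S J]
  congr 1
  · apply Finset.prod_congr rfl
    intro i hi
    rw [Finset.piecewise_eq_of_mem _ _ _ (Finset.mem_inter.1 hi).2]
  · apply Finset.prod_congr rfl
    intro i hi
    rw [Finset.piecewise_eq_of_notMem _ _ _ (Finset.mem_sdiff.1 hi).2]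

lemma toReal_sq_le {n : ℕ} (f : (Fin n → Bool) → Bool) (x : Fin n → Bool) : toReal f x ^ 2 ≤ 1 := by
  unfold toReal; split_ifs <;> norm_num

lemma dd_sq {n : ℕ} (f : (Fin n → Bool) → Bool) (i : Fin n) (x : Fin n → Bool) :
    dd (toReal f) i x ^ 2 = if f (hcFlip x i) ≠ f x then 1 else 0 := by
  unfold dd toReal
  cases h1 : f x <;> cases h2 : f (hcFlip x i) <;> simp

lemma restr {n : ℕ} (f : (Fin n → Bool) → Bool) (J : Finset (Fin n)) :
    ∑ i : Fin n, ∑ S : Finset (Fin n), (if S ∩ J = {i} then fcoef n (toReal f) S ^ 2 else 0) ≤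
      hcExp n (fun x => √(∑ i ∈ J, if f (hcFlip x i) ≠ f x then (1:ℝ) else 0)) := by
  set g := toReal f with hg
  set c : Fin n → (Fin n → Bool) → ℝ := fun i x => fcoef n (fun y => g (J.piecewise y x)) {i} with hc
  have hc2 : ∀ x, ∑ i ∈ J, c i x ^ 2 ≤ 1 := by
    intro x
    calc ∑ i ∈ J, c i x ^ 2
        = ∑ S ∈ J.map ⟨fun i => ({i} : Finset (Fin n)), Finset.singleton_injective⟩,
            fcoef n (fun y => g (J.piecewise y x)) S ^ 2 := by rw [Finset.sum_map]; rfl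
      _ ≤ ∑ S : Finset (Fin n), fcoef n (fun y => g (J.piecewise y x)) S ^ 2 :=
          Finset.sum_le_sum_of_subset_of_nonneg (Finset.subset_univ _) (fun _ _ _ => sq_nonneg _)
      _ = hcExp n (fun y => g (J.piecewise y x) ^ 2) := (parseval _).symm
      _ ≤ hcExp n (fun _ => 1) := hcExp_mono n fun y => toReal_sq_le f _
      _ = 1 := hcExp_const n 1
  have hcx : ∀ i x, c i x = ∑ S : Finset (Fin n),
      (if S ∩ J = {i} then fcoef n g S else 0) * chi (S \ J) x := by
    intro i x
    have : (fun y => g (J.piecewise y x)) = fun y => ∑ S : Finset (Fin n),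
        (fcoef n g S * chi (S \ J) x) * chi (S ∩ J) y := by
      ext y
      conv_lhs => rw [← fourier_inv g]
      apply Finset.sum_congr rfl; intro S _
      rw [chi_piecewise]; ring
    simp only [hc]
    rw [this, fcoef_sum]
    apply Finset.sum_congr rfl; intro S _
    rw [fcoef_mul_left, fcoef_chi]
    by_cases h : S ∩ J = {i}
    · rw [if_pos h, if_pos h.symm]; ring
    · rw [if_neg h, if_neg (Ne.symm h)]; ring
  have key : ∀ i, ∑ S : Finset (Fin n), (if S ∩ J = {i} then fcoef n g S ^ 2 else 0) =
      hcExp n (fun x => c i x * (1 / 2 * (dd g i x * chi {i} x))) := by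
    intro i
    have : (fun x => c i x * (1 / 2 * (dd g i x * chi {i} x))) = fun x => ∑ S : Finset (Fin n),
      ((if S ∩ J = {i} then fcoef n g S else 0) * (1 / 2)) *
        (dd g i x * chi (symmDiff {i} (S \ J)) x) := by
      ext x
      rw [hcx, Finset.sum_mul]
      apply Finset.sum_congr rfl; intro S _
      rw [← chi_mul]; ring
    rw [this, hcExp_sum]
    apply Finset.sum_congr rfl; intro S _
    rw [hcExp_mul_left]
    change _ = _ * fcoef n (dd g i) _
    by_cases h : S ∩ J = {i}
    · have hi : i ∈ S ∩ J := by rw [h]; simp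
      have hS : symmDiff {i} (S \ J) = S := by
        rw [← h]
        ext j; simp only [Finset.mem_symmDiff, Finset.mem_inter, Finset.mem_sdiff]; tauto
      rw [if_pos h, if_pos h, hS, fcoef_dd, if_pos (Finset.mem_inter.1 hi).1]; ring
    · rw [if_neg h, if_neg h]; ring
  have hJ : ∀ i, i ∉ J → ∑ S : Finset (Fin n), (if S ∩ J = {i} then fcoef n g S ^ 2 else 0) = 0 := by
    intro i hi
    apply Finset.sum_eq_zero; intro S _
    rw [if_neg]
    intro h
    have : i ∈ S ∩ J := by rw [h]; simp
    exact hi (Finset.mem_inter.1 this).2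
  rw [← Finset.sum_subset (Finset.subset_univ J) (fun i _ hi => hJ i hi),
    Finset.sum_congr rfl (fun i _ => key i), ← hcExp_sum]
  apply hcExp_mono
  intro x
  refine (Real.sum_mul_le_sqrt_mul_sqrt J _ _).trans ?_
  have h1 : √(∑ i ∈ J, c i x ^ 2) ≤ 1 := Real.sqrt_le_one.2 (hc2 x)
  have h2 : √(∑ i ∈ J, (1 / 2 * (dd g i x * chi {i} x)) ^ 2) ≤
      √(∑ i ∈ J, if f (hcFlip x i) ≠ f x then (1:ℝ) else 0) := by
    apply Real.sqrt_le_sqrt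
    apply Finset.sum_le_sum; intro i _
    rw [mul_pow, mul_pow, chi_sq, ← dd_sq]
    nlinarith [sq_nonneg (dd g i x)]
  calc _ ≤ 1 * _ := mul_le_mul h1 h2 (Real.sqrt_nonneg _) zero_le_one
    _ = _ := one_mul _

/-- weights of a random set -/
def ww (n : ℕ) (a : ℝ) (J : Finset (Fin n)) : ℝ := (∏ _i ∈ J, a) * ∏ _i ∈ univ \ J, (1 - a)

lemma ww_nonneg {n : ℕ} {a : ℝ} (h0 : 0 ≤ a) (h1 : a ≤ 1) (J : Finset (Fin n)) : 0 ≤ ww n a J :=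
  mul_nonneg (Finset.prod_nonneg fun _ _ => h0) (Finset.prod_nonneg fun _ _ => by linarith)

lemma ww_sum (n : ℕ) (a : ℝ) : ∑ J : Finset (Fin n), ww n a J = 1 := by
  unfold ww
  rw [← Finset.powerset_univ, ← Finset.prod_add]; simp

lemma ww_one {n : ℕ} (a : ℝ) (S : Finset (Fin n)) (i : Fin n) (hi : i ∈ S) :
    ∑ J : Finset (Fin n), (if S ∩ J = {i} then ww n a J else 0) = a * (1 - a) ^ (S.card - 1) := by
  set u : Fin n → ℝ := fun j => if j ∈ S then (if j = i then a else 0) else a with hu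
  set v : Fin n → ℝ := fun j => if j = i then 0 else 1 - a with hv
  have h1 : ∀ J : Finset (Fin n), (if S ∩ J = {i} then ww n a J else 0) =
      (∏ j ∈ J, u j) * ∏ j ∈ univ \ J, v j := by
    intro J
    split_ifs with h
    · have hiJ : i ∈ J := by
        have : i ∈ S ∩ J := by rw [h]; simp
        exact (Finset.mem_inter.1 this).2
      unfold ww
      congr 1
      · apply Finset.prod_congr rfl; intro j hj
        simp only [hu]
        by_cases hjS : j ∈ S
        · have : j ∈ S ∩ J := Finset.mem_inter.2 ⟨hjS, hj⟩
          rw [h, Finset.mem_singleton] at this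
          simp [this]
        · simp [hjS]
      · apply Finset.prod_congr rfl; intro j hj
        have : j ≠ i := by rintro rfl; exact (Finset.mem_sdiff.1 hj).2 hiJ
        simp [hv, this]
    · by_cases hiJ : i ∈ J
      · have : ∃ j ∈ S ∩ J, j ≠ i := by
          by_contra hcon
          push Not at hcon
          apply h
          ext j
          simp only [Finset.mem_singleton]
          constructor
          · exact hcon j
          · rintro rfl; exact Finset.mem_inter.2 ⟨hi, hiJ⟩
        obtain ⟨j, hj, hji⟩ := this
        rw [Finset.mem_inter] at hj
        rw [Finset.prod_eq_zero hj.2 (by simp [hu, hj.1, hji]), zero_mul]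
      · rw [Finset.prod_eq_zero (i := i) (s := univ \ J) (by simp [hiJ]) (by simp [hv]), mul_zero]
  rw [Finset.sum_congr rfl (fun J _ => h1 J), ← Finset.powerset_univ, ← Finset.prod_add]
  have h2 : ∀ j, u j + v j = if j ∈ S then (if j = i then a else 1 - a) else 1 := by
    intro j
    by_cases hj : j ∈ S <;> by_cases hji : j = i <;> simp [hu, hv, hj, hji]
    all_goals exact fun h => absurd hi h
  simp only [h2]
  rw [Finset.prod_ite_mem, Finset.univ_inter, ← Finset.mul_prod_erase S _ hi, if_pos rfl]
  congr 1
  rw [← Finset.card_erase_of_mem hi, ← Finset.prod_const]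
  apply Finset.prod_congr rfl; intro j hj
  rw [if_neg (Finset.ne_of_mem_erase hj)]

lemma level_a {n : ℕ} (f : (Fin n → Bool) → Bool) {a p : ℝ} (h0 : 0 ≤ a) (h1 : a ≤ 1)
    (hp : 1 / 2 ≤ p) (hp1 : p ≤ 1) :
    ∑ S : Finset (Fin n), fcoef n (toReal f) S ^ 2 * (S.card * (a * (1 - a) ^ (S.card - 1))) ≤
      a ^ p * hcExp n (fun x => (sens f x : ℝ) ^ p) := by
  have L : ∑ J : Finset (Fin n), ww n a J * (∑ i : Fin n, ∑ S : Finset (Fin n),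
      (if S ∩ J = {i} then fcoef n (toReal f) S ^ 2 else 0)) =
      ∑ S : Finset (Fin n), fcoef n (toReal f) S ^ 2 * (S.card * (a * (1 - a) ^ (S.card - 1))) := by
    simp only [Finset.mul_sum]
    rw [Finset.sum_comm]
    have : ∀ i : Fin n, ∑ J : Finset (Fin n), ∑ S : Finset (Fin n),
        ww n a J * (if S ∩ J = {i} then fcoef n (toReal f) S ^ 2 else 0) =
        ∑ S : Finset (Fin n), fcoef n (toReal f) S ^ 2 *
          (if i ∈ S then a * (1 - a) ^ (S.card - 1) else 0) := by
      intro i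
      rw [Finset.sum_comm]
      apply Finset.sum_congr rfl; intro S _
      have : (if i ∈ S then a * (1 - a) ^ (S.card - 1) else 0) =
          ∑ J : Finset (Fin n), (if S ∩ J = {i} then ww n a J else 0) := by
        split_ifs with h
        · rw [ww_one a S i h]
        · symm; apply Finset.sum_eq_zero; intro J _
          rw [if_neg]
          intro h'
          have : i ∈ S ∩ J := by rw [h']; simp
          exact h (Finset.mem_inter.1 this).1
      rw [this, Finset.mul_sum]
      apply Finset.sum_congr rfl; intro J _
      split_ifs <;> ring
    rw [Finset.sum_congr rfl (fun i _ => this i), Finset.sum_comm]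
    apply Finset.sum_congr rfl; intro S _
    rw [← Finset.mul_sum, Finset.sum_ite_mem]
    simp
  have R : ∀ x, ∑ J : Finset (Fin n), ww n a J *
      √(∑ i ∈ J, if f (hcFlip x i) ≠ f x then (1:ℝ) else 0) ≤ a ^ p * (sens f x : ℝ) ^ p := by
    intro x
    set t : Finset (Fin n) → ℝ := fun J => ∑ i ∈ J, if f (hcFlip x i) ≠ f x then (1:ℝ) else 0 with ht
    have ht0 : ∀ J, 0 ≤ t J := fun J => Finset.sum_nonneg fun i _ => by split_ifs <;> norm_num
    have htn : ∀ J, t J = 0 ∨ 1 ≤ t J := by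
      intro J
      have : t J = ((J.filter fun i => f (hcFlip x i) ≠ f x).card : ℝ) := by
        exact Finset.sum_boole _ _
      rw [this]
      rcases Nat.eq_zero_or_pos (J.filter fun i => f (hcFlip x i) ≠ f x).card with h | h
      · left; rw [h]; simp
      · right; exact_mod_cast h
    have hm : ∑ J, ww n a J * t J = a * sens f x := by
      have e : ∀ J, ww n a J * t J = ∑ i : Fin n, (if f (hcFlip x i) ≠ f x then (1:ℝ) else 0) *
          (if {i} ∩ J = {i} then ww n a J else 0) := by
        intro J
        rw [ht, Finset.mul_sum, ← Finset.sum_subset (Finset.subset_univ J)]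
        · apply Finset.sum_congr rfl; intro i hi
          have : {i} ∩ J = {i} := by simp [hi]
          rw [if_pos this]; ring
        · intro i _ hi
          have : {i} ∩ J ≠ {i} := by simp [hi]
          rw [if_neg this, mul_zero]
      rw [Finset.sum_congr rfl (fun J _ => e J), Finset.sum_comm]
      simp only [← Finset.mul_sum]
      have : ∀ i : Fin n, ∑ J, (if {i} ∩ J = {i} then ww n a J else 0) = a := by
        intro i; rw [ww_one a {i} i (by simp)]; simp
      simp only [this]
      rw [← Finset.sum_mul, mul_comm, Finset.sum_boole]
      rfl
    have hs0 : (0:ℝ) ≤ a * sens f x := by positivity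
    have b1 : ∑ J, ww n a J * √(t J) ≤ a * sens f x := by
      rw [← hm]
      apply Finset.sum_le_sum; intro J _
      apply mul_le_mul_of_nonneg_left _ (ww_nonneg h0 h1 J)
      rcases htn J with h | h
      · rw [h]; simp
      · rw [Real.sqrt_le_left (ht0 J)]; nlinarith
    have b2 : ∑ J, ww n a J * √(t J) ≤ √(a * sens f x) := by
      have := Real.sum_sqrt_mul_sqrt_le (Finset.univ : Finset (Finset (Fin n))) (f := ww n a)
        (g := fun J => ww n a J * t J) (fun J => ww_nonneg h0 h1 J)
        (fun J => mul_nonneg (ww_nonneg h0 h1 J) (ht0 J))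
      rw [hm, ww_sum, Real.sqrt_one, one_mul] at this
      refine le_trans (le_of_eq ?_) this
      apply Finset.sum_congr rfl; intro J _
      rw [Real.sqrt_mul (ww_nonneg h0 h1 J), ← mul_assoc, Real.mul_self_sqrt (ww_nonneg h0 h1 J)]
    rw [← Real.mul_rpow h0 (by positivity)]
    rcases le_total (a * sens f x) 1 with h | h
    · refine b1.trans ?_
      rcases hs0.eq_or_lt with h' | h'
      · rw [← h']; positivity
      · exact Real.self_le_rpow_of_le_one hs0 h hp1
    · refine b2.trans ?_
      rw [Real.sqrt_eq_rpow]
      exact Real.rpow_le_rpow_of_exponent_le h hp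
  rw [← L]
  calc _ ≤ ∑ J : Finset (Fin n), ww n a J *
        hcExp n (fun x => √(∑ i ∈ J, if f (hcFlip x i) ≠ f x then (1:ℝ) else 0)) := by
        apply Finset.sum_le_sum; intro J _
        exact mul_le_mul_of_nonneg_left (restr f J) (ww_nonneg h0 h1 J)
    _ = hcExp n (fun x => ∑ J : Finset (Fin n), ww n a J *
        √(∑ i ∈ J, if f (hcFlip x i) ≠ f x then (1:ℝ) else 0)) := by
        rw [hcExp_sum]
        apply Finset.sum_congr rfl; intro J _
        rw [hcExp_mul_left]
    _ ≤ hcExp n (fun x => a ^ p * (sens f x : ℝ) ^ p) := hcExp_mono n R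
    _ = _ := hcExp_mul_left _ _ _

lemma level_band {n : ℕ} (f : (Fin n → Bool) → Bool) {p A : ℝ}
    (hp : 1 / 2 ≤ p) (hp1 : p ≤ 1) (hf : hcExp n (fun x => (sens f x : ℝ) ^ p) ≤ A)
    (N : ℕ) (hN : 1 ≤ N) :
    ∑ S : Finset (Fin n), (if N ≤ S.card ∧ S.card < 2 * N then fcoef n (toReal f) S ^ 2 else 0) ≤
      8 * ((N : ℝ) ^ (-p) * A) := by
  have hN' : (1:ℝ) ≤ N := by exact_mod_cast hN
  set a : ℝ := 1 / (4 * N) with ha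
  have ha0 : 0 < a := by positivity
  have ha1 : a ≤ 1 / 4 := by
    rw [ha]; apply one_div_le_one_div_of_le <;> linarith
  have h := level_a f ha0.le (by linarith) hp hp1
  have h2 : a ^ p ≤ (N:ℝ) ^ (-p) := by
    rw [Real.rpow_neg (by positivity), ← Real.inv_rpow (by positivity)]
    apply Real.rpow_le_rpow ha0.le _ (by linarith)
    rw [ha, ← one_div]; apply one_div_le_one_div_of_le <;> linarith
  have h3 : ∑ S : Finset (Fin n), (if N ≤ S.card ∧ S.card < 2 * N then fcoef n (toReal f) S ^ 2 else 0) ≤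
      8 * ∑ S : Finset (Fin n), fcoef n (toReal f) S ^ 2 * (S.card * (a * (1 - a) ^ (S.card - 1))) := by
    rw [Finset.mul_sum]
    apply Finset.sum_le_sum; intro S _
    have hq : 0 ≤ (1 - a) ^ (S.card - 1) := pow_nonneg (by linarith) _
    split_ifs with hS
    · have c1 : (N:ℝ) ≤ S.card := by exact_mod_cast hS.1
      have c2 : (S.card:ℝ) ≤ 2 * N := by exact_mod_cast hS.2.le
      have c3 : (1:ℝ) / 2 ≤ (1 - a) ^ (S.card - 1) := by
        have := one_add_mul_le_pow (a := -a) (by linarith) (S.card - 1)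
        have c4 : ((S.card - 1 : ℕ) : ℝ) ≤ S.card := by exact_mod_cast Nat.sub_le _ _
        have c5 : ((S.card - 1 : ℕ) : ℝ) * a ≤ 1 / 2 := by
          calc _ ≤ (2 * N : ℝ) * a := by gcongr; linarith
            _ = _ := by rw [ha]; field_simp; norm_num
        rw [← sub_eq_add_neg] at this
        linarith
      have c6 : (1:ℝ) / 4 ≤ S.card * a := by
        calc (1:ℝ) / 4 = N * a := by rw [ha]; field_simp
          _ ≤ _ := by gcongr
      have c7 : (1:ℝ) / 8 ≤ S.card * (a * (1 - a) ^ (S.card - 1)) := by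
        rw [← mul_assoc]; nlinarith
      nlinarith [sq_nonneg (fcoef n (toReal f) S)]
    · positivity
  have h4 : 0 ≤ hcExp n (fun x => (sens f x : ℝ) ^ p) := hcExp_nonneg n fun x => by positivity
  calc _ ≤ _ := h3
    _ ≤ 8 * (a ^ p * hcExp n (fun x => (sens f x : ℝ) ^ p)) := by gcongr
    _ ≤ _ := by gcongr

lemma level_tail {n : ℕ} (f : (Fin n → Bool) → Bool) {p A : ℝ} (hA : 0 ≤ A) 
    (hp : 1 / 2 ≤ p) (hp1 : p ≤ 1) (hf : hcExp n (fun x => (sens f x : ℝ) ^ p) ≤ A)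
    (D : ℕ) (hD : 1 ≤ D) :
    ∑ S : Finset (Fin n), (if D ≤ S.card then fcoef n (toReal f) S ^ 2 else 0) ≤
      32 * ((D : ℝ) ^ (-p) * A) := by
  have hD' : (1:ℝ) ≤ D := by exact_mod_cast hD
  have hb : ∀ k : ℕ, ((2 ^ k * D : ℕ) : ℝ) ^ (-p) ≤ (3 / 4) ^ k * (D:ℝ) ^ (-p) := by
    intro k
    push_cast
    rw [Real.mul_rpow (by positivity) (by positivity)]
    gcongr
    rw [← Real.rpow_natCast, ← Real.rpow_mul (by norm_num), mul_comm, Real.rpow_mul (by norm_num),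
      Real.rpow_natCast]
    gcongr
    calc (2:ℝ) ^ (-p) ≤ 2 ^ (-(1/2) : ℝ) := Real.rpow_le_rpow_of_exponent_le (by norm_num) (by linarith)
      _ = (√2)⁻¹ := by rw [Real.rpow_neg (by norm_num), Real.sqrt_eq_rpow]
      _ ≤ 3 / 4 := by
        rw [inv_le_comm₀ (by positivity) (by norm_num)]
        apply Real.le_sqrt_of_sq_le; norm_num
  calc _ ≤ ∑ S : Finset (Fin n), ∑ k ∈ range (n + 1),
        (if 2 ^ k * D ≤ S.card ∧ S.card < 2 * (2 ^ k * D) then fcoef n (toReal f) S ^ 2 else 0) := by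
        apply Finset.sum_le_sum; intro S _
        have hnn : ∀ k ∈ range (n + 1), 0 ≤ (if 2 ^ k * D ≤ S.card ∧ S.card < 2 * (2 ^ k * D) then fcoef n (toReal f) S ^ 2 else 0) := by
          intro k _; positivity
        split_ifs with h
        · have hq : S.card / D ≠ 0 := by
            have := Nat.div_pos h (by omega); omega
          have h1 : 2 ^ (Nat.log 2 (S.card / D)) * D ≤ S.card :=
            (Nat.le_div_iff_mul_le (by omega)).1 (Nat.pow_log_le_self 2 hq)
          have h2 : S.card < 2 * (2 ^ (Nat.log 2 (S.card / D)) * D) := by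
            have := Nat.lt_pow_succ_log_self (b := 2) (by norm_num) (S.card / D)
            rw [Nat.div_lt_iff_lt_mul (by omega), Nat.succ_eq_add_one, pow_succ] at this
            linarith
          have h3 : Nat.log 2 (S.card / D) ∈ range (n + 1) := by
            have a1 := Nat.log_le_self 2 (S.card / D)
            have a2 := Nat.div_le_self S.card D
            have a3 := Finset.card_le_univ S
            simp at a3
            rw [Finset.mem_range]; omega
          have := Finset.single_le_sum hnn h3
          rwa [if_pos ⟨h1, h2⟩] at this
        · exact Finset.sum_nonneg hnn
    _ = ∑ k ∈ range (n + 1), ∑ S : Finset (Fin n),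
        (if 2 ^ k * D ≤ S.card ∧ S.card < 2 * (2 ^ k * D) then fcoef n (toReal f) S ^ 2 else 0) :=
        Finset.sum_comm
    _ ≤ ∑ k ∈ range (n + 1), (3 / 4) ^ k * (8 * ((D:ℝ) ^ (-p) * A)) := by
        apply Finset.sum_le_sum; intro k _
        have hk : 1 ≤ 2 ^ k * D := Nat.one_le_iff_ne_zero.2 (by positivity)
        refine (level_band f hp hp1 hf (2 ^ k * D) hk).trans ?_
        have := mul_le_mul_of_nonneg_right (hb k) hA
        linarith
    _ ≤ 4 * (8 * ((D:ℝ) ^ (-p) * A)) := by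
        rw [← Finset.sum_mul]
        gcongr
        have := geom_sum_eq (x := (3/4:ℝ)) (by norm_num) (n + 1)
        rw [this]
        have : (0:ℝ) ≤ (3/4) ^ (n+1) := by positivity
        rw [div_le_iff_of_neg (by norm_num)]; linarith
    _ = _ := by ring

lemma close_of_weight {n : ℕ} (f : (Fin n → Bool) → Bool) (J : Finset (Fin n)) (j : ℕ) (ε : ℝ)
    (hJ : J.card ≤ j)
    (hw : ∑ S : Finset (Fin n), (if S ⊆ J then 0 else fcoef n (toReal f) S ^ 2) ≤ ε / 4) :
    closeToJunta ε j f := by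
  set g : (Fin n → Bool) → ℝ := fun x => ∑ S ∈ J.powerset, fcoef n (toReal f) S * chi S x with hg
  refine ⟨fun x => decide (1 / 2 ≤ g x), ⟨J, hJ, ?_⟩, ?_⟩
  · intro x y hxy
    have : g x = g y := by
      apply Finset.sum_congr rfl; intro S hS
      congr 1
      apply Finset.prod_congr rfl; intro i hi
      rw [hxy i (Finset.mem_powerset.1 hS hi)]
    simp only [this]
  · calc _ ≤ hcExp n (fun x => 4 * (toReal f x - g x) ^ 2) := by
          apply hcExp_mono; intro x
          split_ifs with e
          · positivity
          · cases hf : f x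
            · rw [hf] at e
              have h : 1 / 2 ≤ g x := by
                by_contra h
                exact e (by simp only [h, decide_false])
              simp only [toReal, hf]; norm_num; nlinarith
            · rw [hf] at e
              have h : ¬ (1 / 2 ≤ g x) := by
                intro h
                exact e (by simp only [h, decide_true])
              simp only [toReal, hf]; norm_num; push Not at h; nlinarith
      _ = 4 * ∑ S : Finset (Fin n), (if S ⊆ J then 0 else fcoef n (toReal f) S ^ 2) := by
          rw [hcExp_mul_left, parseval]
          congr 1
          apply Finset.sum_congr rfl; intro S _
          rw [fcoef_sub, hg, fcoef_poly]
          simp only [Finset.mem_powerset]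
          split_ifs <;> ring
      _ ≤ ε := by linarith

lemma sum_dd_sq {n : ℕ} (f : (Fin n → Bool) → Bool) (x : Fin n → Bool) :
    ∑ i, dd (toReal f) i x ^ 2 = (sens f x : ℝ) := by
  simp only [dd_sq]
  rw [Finset.sum_boole]; rfl

lemma low_part (m : ℕ) : ∃ B : ℝ, 1 ≤ B ∧ ∀ (n D : ℕ) (f : (Fin n → Bool) → Bool)
    (p A M τ η : ℝ), 0 ≤ A → 1 ≤ M → 0 < τ → τ ≤ 1 → 0 ≤ η → rr m + η ≤ p →
    hcExp n (fun x => (sens f x : ℝ) ^ p) ≤ A →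
    ∃ J : Finset (Fin n), (J.card : ℝ) * τ ≤ M * A ∧
      ∑ S : Finset (Fin n), (if ¬ S ⊆ J ∧ S.card ≤ D then fcoef n (toReal f) S ^ 2 else 0) ≤
        B ^ D * ((M ^ (-η) * A) ^ (1 / rr m) + √τ * (M * A)) := by
  obtain ⟨B, hB, H⟩ := levelH m
  refine ⟨B, hB, fun n D f p A M τ η hA hM hτ hτ1 hη hp hf => ?_⟩
  have hr := rr_pos m
  have hir : 3 / 2 ≤ 1 / rr m := by
    rw [one_div_rr]
    have := kk_ge m
    have : 1 / kk m ≤ 1 / 2 := one_div_le_one_div_of_le (by norm_num) this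
    linarith
  set r := rr m with hrdef
  set g := toReal f with hg
  set hs : Fin n → (Fin n → Bool) → ℝ := fun i x => if (sens f x : ℝ) < M then dd g i x else 0 with hhs
  set hl : Fin n → (Fin n → Bool) → ℝ := fun i x => if (sens f x : ℝ) < M then 0 else dd g i x with hhl
  set Inf : Fin n → ℝ := fun i => hcExp n (fun x => hs i x ^ 2) with hInf
  have hInf0 : ∀ i, 0 ≤ Inf i := fun i => hcExp_nonneg n fun x => sq_nonneg _
  have hsum : ∑ i, Inf i ≤ M * A := by
    rw [hInf, ← hcExp_sum]
    calc _ ≤ hcExp n (fun x => M * (sens f x : ℝ) ^ p) := by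
          apply hcExp_mono; intro x
          simp only [hhs]
          split_ifs with h
          · rw [sum_dd_sq]
            rcases Nat.eq_zero_or_pos (sens f x) with h0 | h0
            · rw [h0]; simp; positivity
            · have h1 : (1:ℝ) ≤ sens f x := by exact_mod_cast h0
              have : 1 ≤ (sens f x : ℝ) ^ p := Real.one_le_rpow h1 (by linarith)
              nlinarith
          · simp; positivity
      _ ≤ _ := by rw [hcExp_mul_left]; gcongr
  set J : Finset (Fin n) := univ.filter (fun i => τ ≤ Inf i) with hJ
  refine ⟨J, ?_, ?_⟩
  · calc (J.card : ℝ) * τ = ∑ i ∈ J, τ := by simp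
      _ ≤ ∑ i ∈ J, Inf i := Finset.sum_le_sum fun i hi => (Finset.mem_filter.1 hi).2
      _ ≤ ∑ i, Inf i := Finset.sum_le_sum_of_subset_of_nonneg (Finset.subset_univ _) fun i _ _ => hInf0 i
      _ ≤ _ := hsum
  set F := Finset.univ.filter (fun S : Finset (Fin n) => S.card ≤ D) with hF
  -- large part
  have hlarge : ∑ i ∈ Jᶜ, ∑ S ∈ F, fcoef n (hl i) S ^ 2 ≤ B ^ D * (M ^ (-η) * A) ^ (1 / r) := by
    refine (H n D Jᶜ hl).trans ?_
    have h0 : 0 ≤ hcExp n (fun x => (∑ i ∈ Jᶜ, hl i x ^ 2) ^ r) :=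
      hcExp_nonneg n fun x => Real.rpow_nonneg (Finset.sum_nonneg fun i _ => sq_nonneg _) _
    have h1 : hcExp n (fun x => (∑ i ∈ Jᶜ, hl i x ^ 2) ^ r) ≤ M ^ (-η) * A := by
      calc _ ≤ hcExp n (fun x => M ^ (-η) * (sens f x : ℝ) ^ p) := by
            apply hcExp_mono; intro x
            simp only [hhl]
            split_ifs with h
            · simp [hr.ne']; positivity
            · push Not at h
              have hs1 : (1:ℝ) ≤ sens f x := hM.trans h
              have hs0 : (0:ℝ) < sens f x := by linarith
              calc (∑ i ∈ Jᶜ, dd g i x ^ 2) ^ r ≤ (sens f x : ℝ) ^ r := by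
                    apply Real.rpow_le_rpow (Finset.sum_nonneg fun i _ => sq_nonneg _) _ hr.le
                    rw [← sum_dd_sq]
                    exact Finset.sum_le_sum_of_subset_of_nonneg (Finset.subset_univ _)
                      fun i _ _ => sq_nonneg _
                _ ≤ (sens f x : ℝ) ^ (-η + p) :=
                    Real.rpow_le_rpow_of_exponent_le hs1 (by linarith)
                _ = (sens f x : ℝ) ^ (-η) * (sens f x : ℝ) ^ p := Real.rpow_add hs0 _ _
                _ ≤ _ := by
                    gcongr ?_ * _
                    exact Real.rpow_le_rpow_of_nonpos (by linarith) h (by linarith)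
        _ ≤ _ := by rw [hcExp_mul_left]; gcongr
    gcongr
  have hsmall : ∑ i ∈ Jᶜ, ∑ S ∈ F, fcoef n (hs i) S ^ 2 ≤ B ^ D * (√τ * (M * A)) := by
    calc _ ≤ ∑ i ∈ Jᶜ, B ^ D * (√τ * Inf i) := by
          apply Finset.sum_le_sum; intro i hi
          have h1 := H n D {i} hs
          simp only [Finset.sum_singleton] at h1
          refine h1.trans ?_
          have h2 : (fun x => (hs i x ^ 2) ^ r) = fun x => hs i x ^ 2 := by
            ext x
            have : hs i x ^ 2 = 0 ∨ hs i x ^ 2 = 1 := by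
              simp only [hhs]
              split_ifs
              · rw [dd_sq]; split_ifs <;> simp
              · simp
            rcases this with h | h <;> rw [h]
            · exact Real.zero_rpow hr.ne'
            · exact Real.one_rpow _
          rw [h2]
          change B ^ D * Inf i ^ (1 / r) ≤ _
          have hlt : Inf i < τ := by
            simpa [hJ] using hi
          gcongr
          rcases (hInf0 i).eq_or_lt with h | h
          · rw [← h, Real.zero_rpow (by positivity)]; simp
          · calc Inf i ^ (1 / r) = Inf i ^ ((1 / r - 1) + 1) := by ring_nf
              _ = Inf i ^ (1 / r - 1) * Inf i := by rw [Real.rpow_add h, Real.rpow_one]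
              _ ≤ Inf i ^ ((1:ℝ) / 2) * Inf i := by
                  gcongr ?_ * _
                  exact Real.rpow_le_rpow_of_exponent_ge h (by linarith) (by linarith)
              _ ≤ √τ * Inf i := by
                  rw [← Real.sqrt_eq_rpow]; gcongr
      _ = B ^ D * (√τ * ∑ i ∈ Jᶜ, Inf i) := by rw [Finset.mul_sum, Finset.mul_sum]
      _ ≤ _ := by
          gcongr
          exact (Finset.sum_le_sum_of_subset_of_nonneg (Finset.subset_univ _) fun i _ _ => hInf0 i).trans hsum
  have hsplit : ∀ i S, fcoef n (dd g i) S = fcoef n (hs i) S + fcoef n (hl i) S := by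
    intro i S
    rw [← fcoef_add]
    congr 1; ext x
    simp only [hhs, hhl]; split_ifs <;> ring
  calc _ ≤ ∑ S : Finset (Fin n), ∑ i ∈ Jᶜ, (if S ∈ F then (1 / 4) * fcoef n (dd g i) S ^ 2 else 0) := by
        apply Finset.sum_le_sum; intro S _
        have hnn : ∀ i ∈ Jᶜ, 0 ≤ (if S ∈ F then (1 / 4) * fcoef n (dd g i) S ^ 2 else 0) := by
          intro i _; positivity
        by_cases h : ¬ S ⊆ J ∧ S.card ≤ D
        · rw [if_pos h]
          obtain ⟨i, hiS, hiJ⟩ := Finset.not_subset.1 h.1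
          have := Finset.single_le_sum hnn (Finset.mem_compl.2 hiJ)
          have hSF : S ∈ F := by simp [hF, h.2]
          simp only [if_pos hSF] at this
          refine le_trans (le_of_eq ?_) (this.trans (le_of_eq ?_))
          · rw [fcoef_dd, if_pos hiS]; ring
          · simp only [if_pos hSF]
        · rw [if_neg h]; exact Finset.sum_nonneg hnn
    _ = ∑ i ∈ Jᶜ, ∑ S ∈ F, (1 / 4) * fcoef n (dd g i) S ^ 2 := by
        rw [Finset.sum_comm]
        apply Finset.sum_congr rfl; intro i _
        rw [Finset.sum_ite_mem]; simp
    _ ≤ ∑ i ∈ Jᶜ, ∑ S ∈ F, (fcoef n (hl i) S ^ 2 + fcoef n (hs i) S ^ 2) := by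
        apply Finset.sum_le_sum; intro i _
        apply Finset.sum_le_sum; intro S _
        rw [hsplit]
        nlinarith [sq_nonneg (fcoef n (hs i) S - fcoef n (hl i) S), sq_nonneg (fcoef n (hs i) S), sq_nonneg (fcoef n (hl i) S)]
    _ = ∑ i ∈ Jᶜ, ∑ S ∈ F, fcoef n (hl i) S ^ 2 + ∑ i ∈ Jᶜ, ∑ S ∈ F, fcoef n (hs i) S ^ 2 := by
        simp only [Finset.sum_add_distrib]
    _ ≤ _ := by rw [mul_add]; exact add_le_add hlarge hsmall

lemma exists_m (δ : ℝ) (hδ : 0 < δ) : ∃ m : ℕ, rr m ≤ 1 / 2 + δ / 2 := by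
  obtain ⟨m, hm⟩ := exists_nat_gt (1 / δ)
  refine ⟨m, ?_⟩
  have h1 : (m : ℝ) ≤ kk m := by
    have : m ≤ 2 ^ (m + 1) := (Nat.lt_two_pow_self.le).trans (Nat.pow_le_pow_right (by norm_num) (Nat.le_succ m))
    unfold kk; exact_mod_cast this
  have h2 := kk_ge m
  have h3 : 1 ≤ kk m * δ := by
    rw [div_lt_iff₀ hδ] at hm; nlinarith
  unfold rr
  rw [div_le_iff₀ (by linarith)]
  nlinarith

lemma main_thm (δ : ℝ) (hδ : 0 < δ) :
    ∃ C : ℝ, 0 < C ∧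
      ∀ (ε A p : ℝ), 0 < ε → 0 < A → 1 / 2 + δ ≤ p → p ≤ 1 →
        ∀ (n : ℕ) (f : (Fin n → Bool) → Bool),
          hcExp n (fun x => (sens f x : ℝ) ^ p) ≤ A →
          closeToJunta ε ⌊(2 : ℝ) ^ (C * (A / ε) ^ (1 / p))⌋₊ f := by
  obtain ⟨m, hm⟩ := exists_m δ hδ
  obtain ⟨B, hB, H⟩ := low_part m
  set E : ℝ := (256 * B) ^ (1 / (δ / 2)) with hE
  have hE1 : 1 ≤ E := Real.one_le_rpow (by linarith) (by positivity)
  have hEη : E ^ (δ / 2) = 256 * B := by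
    rw [hE, ← Real.rpow_mul (by positivity), one_div_mul_cancel (by positivity), Real.rpow_one]
  set T : ℝ := 32 * B * E with hT
  have hT1 : 32 ≤ T := by rw [hT]; nlinarith
  set Z : ℝ := 2 * E * T ^ 2 with hZ
  have hZ1 : 1 < Z := by rw [hZ]; nlinarith
  refine ⟨2 * 256 ^ 2 * Real.logb 2 Z, by
    have := Real.logb_pos (b := 2) (by norm_num) hZ1
    positivity, ?_⟩
  intro ε A p hε hA hp hp1 n f hf
  by_cases hε1 : 1 < ε
  · refine ⟨fun _ => false, ⟨∅, by simp, fun _ _ _ => rfl⟩, ?_⟩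
    calc _ ≤ hcExp n (fun _ => 1) := by
          apply hcExp_mono; intro x; split_ifs <;> norm_num
      _ = 1 := hcExp_const n 1
      _ ≤ ε := hε1.le
  push Not at hε1
  have hp0 : 0 < p := by linarith
  have hp2 : 1 / 2 ≤ p := by linarith
  set X : ℝ := 256 * (A / ε) with hX
  have hAX : A = ε * X / 256 := by rw [hX]; field_simp
  have hX0 : 0 < X := by positivity
  rcases lt_or_ge X 1 with hX1 | hX1
  · apply close_of_weight f ∅ _ ε (by simp)
    have := level_tail f hA.le hp2 hp1 hf 1 le_rfl
    simp only [Nat.cast_one, Real.one_rpow, one_mul] at this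
    calc _ ≤ _ := by
          apply Finset.sum_le_sum; intro S _
          show _ ≤ (if 1 ≤ S.card then fcoef n (toReal f) S ^ 2 else 0)
          by_cases h : S = ∅
          · simp [h]
          · have h1 : 1 ≤ S.card := Finset.card_pos.2 (Finset.nonempty_iff_ne_empty.2 h)
            rw [if_pos h1, if_neg (by simpa using h)]
      _ ≤ _ := this
      _ ≤ ε / 4 := by rw [hAX]; nlinarith
  set Y : ℝ := X ^ (1 / p) with hY
  have hip : 1 ≤ 1 / p := by rw [le_div_iff₀ hp0]; linarith
  have hip2 : 1 / p ≤ 2 := by rw [div_le_iff₀ hp0]; linarith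
  have hY1 : 1 ≤ Y := Real.one_le_rpow hX1 (by positivity)
  have hXY : X ≤ Y := by
    calc X = X ^ (1:ℝ) := (Real.rpow_one _).symm
      _ ≤ Y := Real.rpow_le_rpow_of_exponent_le hX1 hip
  set D : ℕ := ⌈Y⌉₊ with hD
  have hYD : Y ≤ D := Nat.le_ceil _
  have hD1 : 1 ≤ D := by
    have : (1:ℝ) ≤ D := hY1.trans hYD
    exact_mod_cast this
  have hDY : (D:ℝ) ≤ 2 * Y := by
    have := Nat.ceil_lt_add_one (a := Y) (by linarith)
    linarith
  have hDR : (D:ℝ) ≤ 2 * 256 ^ 2 * (A / ε) ^ (1 / p) := by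
    have : Y = 256 ^ (1 / p) * (A / ε) ^ (1 / p) := by
      rw [hY, hX, Real.mul_rpow (by norm_num) (by positivity)]
    have h2 : (256:ℝ) ^ (1 / p) ≤ 256 ^ 2 := by
      rw [← Real.rpow_natCast]
      exact Real.rpow_le_rpow_of_exponent_le (by norm_num) (by simpa using hip2)
    have h3 : 0 ≤ (A / ε) ^ (1 / p) := by positivity
    calc (D:ℝ) ≤ 2 * Y := hDY
      _ = 2 * 256 ^ (1 / p) * (A / ε) ^ (1 / p) := by rw [this]; ring
      _ ≤ _ := by gcongr
  have hDp : X ≤ (D:ℝ) ^ p := by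
    calc X = Y ^ p := by rw [hY, ← Real.rpow_mul hX0.le, one_div_mul_cancel hp0.ne', Real.rpow_one]
      _ ≤ _ := by gcongr
  have htail := level_tail f hA.le hp2 hp1 hf D hD1
  have htail2 : 32 * ((D : ℝ) ^ (-p) * A) ≤ ε / 8 := by
    have : (D:ℝ) ^ (-p) ≤ X⁻¹ := by
      rw [Real.rpow_neg (by positivity)]; gcongr
    calc 32 * ((D : ℝ) ^ (-p) * A) ≤ 32 * (X⁻¹ * A) := by gcongr
      _ = ε / 8 := by rw [hAX]; field_simp; norm_num
  have hA2 : A ≤ ε * 2 ^ D := by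
    have h1 : (D:ℝ) ≤ 2 ^ D := by exact_mod_cast Nat.lt_two_pow_self.le
    have h2 : X ≤ 2 ^ D := by linarith
    rw [hAX]; nlinarith
  set M : ℝ := E ^ D with hM
  have hM1 : 1 ≤ M := one_le_pow₀ hE1
  set τ : ℝ := ((T ^ D)⁻¹) ^ 2 with hτ
  have hTD : 1 ≤ T ^ D := one_le_pow₀ (by linarith)
  have hTi : (T ^ D)⁻¹ ≤ 1 := inv_le_one_of_one_le₀ hTD
  obtain ⟨J, hJ, hlow⟩ := H n D f p A M τ (δ / 2) hA.le hM1 (by positivity)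
    (pow_le_one₀ (by positivity) hTi) (by positivity) (by linarith) hf
  have hsq : √τ = (T ^ D)⁻¹ := Real.sqrt_sq (by positivity)
  have hMη : M ^ (-(δ / 2)) = ((256 * B) ^ D)⁻¹ := by
    rw [hM, Real.rpow_neg (by positivity), ← Real.rpow_natCast, ← Real.rpow_mul (by positivity),
      mul_comm, Real.rpow_mul (by positivity), hEη, Real.rpow_natCast]
  have pow16 : ∀ c : ℝ, 0 ≤ c → c ≤ 1 / 16 → c ^ D ≤ 1 / 16 := by
    intro c h0 h1
    calc c ^ D ≤ c ^ 1 := pow_le_pow_of_le_one h0 (by linarith) hD1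
      _ ≤ 1 / 16 := by simpa using h1
  have hBpos : 0 < B := by linarith
  have t1 : B ^ D * (M ^ (-(δ / 2)) * A) ^ (1 / rr m) ≤ ε / 16 := by
    have z1 : M ^ (-(δ / 2)) * A ≤ ε * ((2 / (256 * B)) ^ D) := by
      rw [hMη]
      calc _ ≤ ((256 * B) ^ D)⁻¹ * (ε * 2 ^ D) := by gcongr
        _ = _ := by rw [div_pow]; field_simp
    have z0 : 0 ≤ M ^ (-(δ / 2)) * A := by positivity
    have z2 : (2 / (256 * B)) ^ D ≤ 1 := by
      apply pow_le_one₀ (by positivity)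
      rw [div_le_one (by positivity)]; linarith
    have z3 : M ^ (-(δ / 2)) * A ≤ 1 := z1.trans (mul_le_one₀ hε1 (by positivity) z2)
    have z4 : 1 ≤ 1 / rr m := by
      rw [one_div_rr]
      have := kk_ge m
      have : 1 / kk m ≤ 1 / 2 := one_div_le_one_div_of_le (by norm_num) this
      linarith
    calc B ^ D * (M ^ (-(δ / 2)) * A) ^ (1 / rr m) ≤ B ^ D * (M ^ (-(δ / 2)) * A) := by
          gcongr
          exact Real.rpow_le_self_of_le_one z0 z3 z4
      _ ≤ B ^ D * (ε * ((2 / (256 * B)) ^ D)) := by gcongr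
      _ = ε * (1 / 128) ^ D := by
          rw [mul_left_comm, ← mul_pow]; congr 2; field_simp; norm_num
      _ ≤ ε * (1 / 16) := by gcongr; exact pow16 _ (by norm_num) (by norm_num)
      _ = _ := by ring
  have t2 : B ^ D * (√τ * (M * A)) ≤ ε / 16 := by
    rw [hsq]
    calc _ ≤ B ^ D * ((T ^ D)⁻¹ * (E ^ D * (ε * 2 ^ D))) := by gcongr
      _ = ε * (B * T⁻¹ * E * 2) ^ D := by rw [mul_pow (B * T⁻¹ * E) 2, mul_pow (B * T⁻¹) E, mul_pow B T⁻¹, inv_pow]; ring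
      _ = ε * (1 / 16) ^ D := by
          congr 2; rw [hT]; field_simp; norm_num
      _ ≤ ε * (1 / 16) := by gcongr; exact pow16 _ (by norm_num) (by norm_num)
      _ = _ := by ring
  apply close_of_weight f J _ ε
  · apply Nat.le_floor
    have hτi : τ * (T ^ 2) ^ D = 1 := by
      rw [hτ, ← pow_mul, mul_comm 2 D, pow_mul, ← mul_pow, inv_mul_cancel₀ (by positivity), one_pow]
    calc (J.card : ℝ) = J.card * τ * (T ^ 2) ^ D := by rw [mul_assoc, hτi, mul_one]
      _ ≤ M * A * (T ^ 2) ^ D := by gcongr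
      _ ≤ E ^ D * (1 * 2 ^ D) * (T ^ 2) ^ D := by
          gcongr
          exact hA2.trans (by gcongr)
      _ = Z ^ D := by rw [hZ, mul_pow (2 * E) (T ^ 2), mul_pow 2 E]; ring
      _ = Z ^ (D : ℝ) := (Real.rpow_natCast _ _).symm
      _ ≤ Z ^ (2 * 256 ^ 2 * (A / ε) ^ (1 / p)) := Real.rpow_le_rpow_of_exponent_le hZ1.le hDR
      _ = _ := by
          conv_lhs => rw [← Real.rpow_logb (b := 2) (by norm_num) (by norm_num) (show 0 < Z by linarith)]
          rw [← Real.rpow_mul (by norm_num)]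
          congr 1; ring
  · calc _ ≤ ∑ S : Finset (Fin n), ((if D ≤ S.card then fcoef n (toReal f) S ^ 2 else 0) +
          (if ¬ S ⊆ J ∧ S.card ≤ D then fcoef n (toReal f) S ^ 2 else 0)) := by
          apply Finset.sum_le_sum; intro S _
          by_cases h1 : S ⊆ J
          · simp [h1]; positivity
          · rcases le_total D S.card with h2 | h2
            · simp only [h1, h2, if_true, if_false]
              have : 0 ≤ (if ¬ False ∧ S.card ≤ D then fcoef n (toReal f) S ^ 2 else 0) := by positivity
              linarith
            · simp only [h1, h2, if_true, if_false]
              have : 0 ≤ (if D ≤ S.card then fcoef n (toReal f) S ^ 2 else 0) := by positivity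
              simp; positivity
      _ = _ := Finset.sum_add_distrib
      _ ≤ ε / 8 + (ε / 16 + ε / 16) := by
          refine add_le_add (htail.trans htail2) (hlow.trans ?_)
          rw [mul_add]; exact add_le_add t1 t2
      _ = ε / 4 := by ring

theorem strengthened_friedgut (δ : ℝ) (hδ : 0 < δ) :
    ∃ C : ℝ, 0 < C ∧
      ∀ (ε A p : ℝ), 0 < ε → 0 < A → 1 / 2 + δ ≤ p → p ≤ 1 →
        ∀ (n : ℕ) (f : (Fin n → Bool) → Bool),
          hcExp n (fun x => (sens f x : ℝ) ^ p) ≤ A →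
          closeToJunta ε ⌊(2 : ℝ) ^ (C * (A / ε) ^ (1 / p))⌋₊ f := by
  exact main_thm δ hδ

end
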